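/- Let 𝚫 ∈ Ã and let 𝒪₁, …, 𝒪_m be the pairwise distinct triangles in 𝚫 (i.e. all of them). If α_i ∈ 𝒪_i for each i ∈ [1,m] and 𝚫' := 𝚫 ∖ {α₁,…,α_m}, then 𝚫' is a 1-cycle gentle quiver. -/

import Mathlib

/-! Common formalization infrastructure for gentle quivers (Bobinski–Buan,
    "Derived equivalence classification of gentle cluster tilted algebras"). -/

/-- A (finite) quiver with (length-two, monomial) relations.  Vertices and
arrows are natural numbers; `V` and `A` are the finite sets of vertices and
arrows, `src`/`tgt` give the start and terminus of each arrow, and `rel` is the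
set of relations, a relation `(a, b)` standing for the length-two path
`a·b` (so `src a = tgt b`). -/
structure QuivRel where
  V : Finset ℕ
  A : Finset ℕ
  src : ℕ → ℕ
  tgt : ℕ → ℕ
  rel : Finset (ℕ × ℕ)

namespace GentleQuiv

/-- Two vertices are adjacent if some arrow joins them (in either direction). -/
def Adj (Q : QuivRel) (x y : ℕ) : Prop :=
  ∃ a ∈ Q.A, (Q.src a = x ∧ Q.tgt a = y) ∨ (Q.src a = y ∧ Q.tgt a = x)

/-- A quiver is connected if any two of its vertices are joined by a walk. -/
def Connected (Q : QuivRel) : Prop :=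
  ∀ x ∈ Q.V, ∀ y ∈ Q.V, Relation.ReflTransGen (Adj Q) x y

/-- `l = [α₁, …, αₙ]` is a (nonempty) path in the quiver: consecutive arrows
compose, i.e. `s αᵢ = t αᵢ₊₁`. -/
def IsPathList (Q : QuivRel) (l : List ℕ) : Prop :=
  l ≠ [] ∧ (∀ a ∈ l, a ∈ Q.A) ∧ l.Chain' (fun a b => Q.src a = Q.tgt b)

/-- The path `l` contains a subpath (two consecutive arrows) lying in `R`. -/
def HasRelSubpath (Q : QuivRel) (l : List ℕ) : Prop :=
  ∃ a b, (a, b) ∈ Q.rel ∧ [a, b] <:+: l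

/-- Gentle quiver: connected, relations are composable pairs of arrows, at most
two arrows in/out of every vertex, the usual gentleness conditions on
relations, and a global bound forcing finite dimensionality. -/
def IsGentle (Q : QuivRel) : Prop :=
  Q.V.Nonempty ∧
  (∀ a ∈ Q.A, Q.src a ∈ Q.V ∧ Q.tgt a ∈ Q.V) ∧
  Connected Q ∧
  (∀ ρ ∈ Q.rel, ρ.1 ∈ Q.A ∧ ρ.2 ∈ Q.A ∧ Q.src ρ.1 = Q.tgt ρ.2) ∧
  (∀ x, (Q.A.filter fun a => Q.src a = x).card ≤ 2) ∧
  (∀ x, (Q.A.filter fun a => Q.tgt a = x).card ≤ 2) ∧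
  (∀ a ∈ Q.A, (Q.A.filter fun b => Q.src b = Q.tgt a ∧ (b, a) ∉ Q.rel).card ≤ 1) ∧
  (∀ a ∈ Q.A, (Q.A.filter fun c => Q.tgt c = Q.src a ∧ (a, c) ∉ Q.rel).card ≤ 1) ∧
  (∀ a ∈ Q.A, (Q.A.filter fun b => (b, a) ∈ Q.rel).card ≤ 1) ∧
  (∀ a ∈ Q.A, (Q.A.filter fun c => (a, c) ∈ Q.rel).card ≤ 1) ∧
  (∃ n : ℕ, ∀ l : List ℕ, IsPathList Q l → l.length = n → HasRelSubpath Q l)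

/-- A choice of functions `σ, τ : Δ₁ → {±1}` as in Avella-Alaminos–Geiss. -/
structure SigmaTau (Q : QuivRel) where
  σ : ℕ → ℤ
  τ : ℕ → ℤ
  σ_pm : ∀ a ∈ Q.A, σ a = 1 ∨ σ a = -1
  τ_pm : ∀ a ∈ Q.A, τ a = 1 ∨ τ a = -1
  σ_src : ∀ a ∈ Q.A, ∀ b ∈ Q.A, a ≠ b → Q.src a = Q.src b → σ a = -σ b
  τ_tgt : ∀ a ∈ Q.A, ∀ b ∈ Q.A, a ≠ b → Q.tgt a = Q.tgt b → τ a = -τ b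
  rel_iff : ∀ a ∈ Q.A, ∀ b ∈ Q.A, Q.src a = Q.tgt b → ((a, b) ∈ Q.rel ↔ σ a = τ b)

/-- A thread: either a trivial path/antipath `1_{x,ε}` at a vertex `x` with a
sign `ε`, or a sequence of arrows of positive length. -/
inductive Thread where
  | triv (x : ℕ) (ε : ℤ) : Thread
  | arrows (l : List ℕ) : Thread
deriving DecidableEq

/-- Source of a thread. -/
def Thread.source (Q : QuivRel) : Thread → ℕ
  | .triv x _ => x
  | .arrows l => Q.src l.getLast!

/-- Target of a thread. -/
def Thread.target (Q : QuivRel) : Thread → ℕ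
  | .triv x _ => x
  | .arrows l => Q.tgt l.head!

/-- `σω` (for paths and antipaths alike; `σ 1_{x,ε} = ε = σ 1'_{x,ε}`). -/
def Thread.sigma {Q : QuivRel} (st : SigmaTau Q) : Thread → ℤ
  | .triv _ ε => ε
  | .arrows l => st.σ l.getLast!

/-- `τω` when `ω` is regarded as a path (`τ 1_{x,ε} = -ε`). -/
def Thread.tauPath {Q : QuivRel} (st : SigmaTau Q) : Thread → ℤ
  | .triv _ ε => -ε
  | .arrows l => st.τ l.head!

/-- `τω` when `ω` is regarded as an antipath (`τ 1'_{x,ε} = ε`). -/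
def Thread.tauAnti {Q : QuivRel} (st : SigmaTau Q) : Thread → ℤ
  | .triv _ ε => ε
  | .arrows l => st.τ l.head!

/-- Length of a thread. -/
def Thread.len : Thread → ℕ
  | .triv _ _ => 0
  | .arrows l => l.length

/-- A path in `𝚫` of positive length (no two consecutive arrows in `R`). -/
def IsPermList (Q : QuivRel) (l : List ℕ) : Prop :=
  IsPathList Q l ∧ l.Chain' (fun a b => (a, b) ∉ Q.rel)

/-- An antipath in `𝚫` of positive length (all consecutive pairs in `R`). -/
def IsAntiList (Q : QuivRel) (l : List ℕ) : Prop :=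
  l ≠ [] ∧ (∀ a ∈ l, a ∈ Q.A) ∧ l.Chain' (fun a b => (a, b) ∈ Q.rel)

/-- A thread is a path in `𝚫` (including trivial ones). -/
def IsPathThread (Q : QuivRel) : Thread → Prop
  | .triv x ε => x ∈ Q.V ∧ (ε = 1 ∨ ε = -1)
  | .arrows l => IsPermList Q l

/-- A thread is an antipath in `𝚫` (including trivial ones). -/
def IsAntiThread (Q : QuivRel) : Thread → Prop
  | .triv x ε => x ∈ Q.V ∧ (ε = 1 ∨ ε = -1)
  | .arrows l => IsAntiList Q l

/-- `w ∈ ℳ`: `w` is a maximal path of `𝚫`. -/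
def InM (Q : QuivRel) (st : SigmaTau Q) (w : Thread) : Prop :=
  IsPathThread Q w ∧
  (¬ ∃ a ∈ Q.A, Q.src a = w.target Q ∧ st.σ a = -(w.tauPath st)) ∧
  (¬ ∃ b ∈ Q.A, Q.tgt b = w.source Q ∧ st.τ b = -(w.sigma st))

/-- `w ∈ 𝒩`: `w` is a maximal antipath of `𝚫`. -/
def InN (Q : QuivRel) (st : SigmaTau Q) (w : Thread) : Prop :=
  IsAntiThread Q w ∧
  (¬ ∃ a ∈ Q.A, Q.src a = w.target Q ∧ st.σ a = w.tauAnti st) ∧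
  (¬ ∃ b ∈ Q.A, Q.tgt b = w.source Q ∧ st.τ b = w.sigma st)

/-- The graph of the bijection `Φ = φ ∘ ψ : 𝒩 → 𝒩`:  `PhiRel Q st w w'` holds
iff `w, w' ∈ 𝒩` and the maximal path `ψ w` (with `s(ψw) = sw`, `σ(ψw) = -σw`)
satisfies `t w' = t (ψ w)` and `τ w' = -τ(ψ w)`, i.e. `w' = φ (ψ w) = Φ w`. -/
def PhiRel (Q : QuivRel) (st : SigmaTau Q) (w w' : Thread) : Prop :=
  InN Q st w ∧ InN Q st w' ∧
  ∃ m : Thread, InM Q st m ∧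
    m.source Q = w.source Q ∧ m.sigma st = -(w.sigma st) ∧
    w'.target Q = m.target Q ∧ w'.tauAnti st = -(m.tauPath st)

/-- `O` is an orbit of the `ℤ`-action on `𝒩` induced by `Φ`. -/
def NOrbit (Q : QuivRel) (st : SigmaTau Q) (O : Set Thread) : Prop :=
  ∃ w, InN Q st w ∧ O = {w' | Relation.EqvGen (PhiRel Q st) w w'}

/-- `p(𝒪) = |𝒪|` for an orbit `𝒪 ∈ 𝒩/ℤ`. -/
noncomputable def pN (O : Set Thread) : ℕ := O.ncard

/-- `q(𝒪) = Σ_{ω ∈ 𝒪} ℓ(ω)` for an orbit `𝒪 ∈ 𝒩/ℤ`. -/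
noncomputable def qN (O : Set Thread) : ℕ := ∑ᶠ w ∈ O, Thread.len w

/-- `a ∈ 𝒞`: the arrow `a` occurs in no maximal antipath. -/
def InC (Q : QuivRel) (st : SigmaTau Q) (a : ℕ) : Prop :=
  a ∈ Q.A ∧ ¬ ∃ l : List ℕ, InN Q st (.arrows l) ∧ a ∈ l

/-- The graph of the bijection `Ψ : 𝒞 → 𝒞`. -/
def PsiRel (Q : QuivRel) (st : SigmaTau Q) (a b : ℕ) : Prop :=
  InC Q st a ∧ InC Q st b ∧ Q.tgt b = Q.src a ∧ st.τ b = st.σ a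

/-- `O` is an orbit of the `ℤ`-action on `𝒞` induced by `Ψ`. -/
def COrbit (Q : QuivRel) (st : SigmaTau Q) (O : Set ℕ) : Prop :=
  ∃ a, InC Q st a ∧ O = {b | Relation.EqvGen (PsiRel Q st) a b}

/-- The Avella-Alaminos–Geiss invariant `f_𝚫 : ℕ² → ℕ`:  `f_𝚫 (p,q)` counts the
orbits `𝒪 ∈ 𝒩/ℤ ⊔ 𝒞/ℤ` with `p(𝒪) = p` and `q(𝒪) = q`. -/
noncomputable def fInv (Q : QuivRel) (st : SigmaTau Q) : ℕ × ℕ → ℕ := fun pq =>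
  {O : Set Thread | NOrbit Q st O ∧ pN O = pq.1 ∧ qN O = pq.2}.ncard +
  {O : Set ℕ | COrbit Q st O ∧ pq.1 = 0 ∧ O.ncard = pq.2}.ncard

/-- `[p, q] : ℕ² → ℕ`, the characteristic function of `{(p, q)}`. -/
def charFn (p q : ℕ) : ℕ × ℕ → ℕ := fun pq => if pq = (p, q) then 1 else 0

/-- Tree type: `|Δ₀| = |Δ₁| + 1`. -/
def TreeType (Q : QuivRel) : Prop := Q.V.card = Q.A.card + 1

/-- Removing a set of arrows (keeping all vertices); relations containing a
removed arrow are discarded. -/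
def deleteArrows (Q : QuivRel) (S : Finset ℕ) : QuivRel where
  V := Q.V
  A := Q.A \ S
  src := Q.src
  tgt := Q.tgt
  rel := Q.rel.filter fun ρ => ρ.1 ∉ S ∧ ρ.2 ∉ S

/-- Branch arrow: removing it disconnects the quiver. -/
def BranchArrow (Q : QuivRel) (a : ℕ) : Prop :=
  a ∈ Q.A ∧ ¬ Connected (deleteArrows Q {a})

/-- Cycle arrow: removing it leaves the quiver connected. -/
def CycleArrow (Q : QuivRel) (a : ℕ) : Prop :=
  a ∈ Q.A ∧ Connected (deleteArrows Q {a})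

/-- Branch relation: a relation one of whose arrows is a branch arrow. -/
def BranchRel (Q : QuivRel) (ρ : ℕ × ℕ) : Prop :=
  ρ ∈ Q.rel ∧ (BranchArrow Q ρ.1 ∨ BranchArrow Q ρ.2)

/-- A relation `ρ = (α, β)` is isolated if the antipath `(α, β)` is a maximal
antipath, i.e. `ρ ∈ 𝒩`. -/
def Isolated (Q : QuivRel) (st : SigmaTau Q) (ρ : ℕ × ℕ) : Prop :=
  ρ ∈ Q.rel ∧ InN Q st (.arrows [ρ.1, ρ.2])

/-- `Q'` is obtained from `Q` by completing the relations from `R₀`, the new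
arrow attached to `ρ ∈ R₀` being `γ ρ`. -/
structure IsCompletion (Q : QuivRel) (R0 : Finset (ℕ × ℕ)) (γ : ℕ × ℕ → ℕ)
    (Q' : QuivRel) : Prop where
  subset : R0 ⊆ Q.rel
  fresh : ∀ ρ ∈ R0, γ ρ ∉ Q.A
  inj : ∀ ρ ∈ R0, ∀ ρ' ∈ R0, γ ρ = γ ρ' → ρ = ρ'
  V_eq : Q'.V = Q.V
  A_eq : Q'.A = Q.A ∪ R0.image γ
  src_old : ∀ a ∈ Q.A, Q'.src a = Q.src a
  tgt_old : ∀ a ∈ Q.A, Q'.tgt a = Q.tgt a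
  src_new : ∀ ρ ∈ R0, Q'.src (γ ρ) = Q.tgt ρ.1
  tgt_new : ∀ ρ ∈ R0, Q'.tgt (γ ρ) = Q.src ρ.2
  rel_eq : Q'.rel = Q.rel ∪ R0.image (fun ρ => (γ ρ, ρ.1)) ∪
      R0.image (fun ρ => (ρ.2, γ ρ))

/-- A 3-cycle: three pairwise distinct arrows forming an oriented cycle. -/
def Is3Cycle (Q : QuivRel) (a0 a1 a2 : ℕ) : Prop :=
  a0 ∈ Q.A ∧ a1 ∈ Q.A ∧ a2 ∈ Q.A ∧ a0 ≠ a1 ∧ a1 ≠ a2 ∧ a0 ≠ a2 ∧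
  Q.src a0 = Q.tgt a1 ∧ Q.src a1 = Q.tgt a2 ∧ Q.src a2 = Q.tgt a0

/-- A triangle: a 3-cycle all of whose three compositions are relations. -/
def IsTriangleTriple (Q : QuivRel) (a0 a1 a2 : ℕ) : Prop :=
  Is3Cycle Q a0 a1 a2 ∧ (a0, a1) ∈ Q.rel ∧ (a1, a2) ∈ Q.rel ∧ (a2, a0) ∈ Q.rel

/-- The (unordered) set of arrows of a triangle. -/
def TriangleSet (Q : QuivRel) (O : Finset ℕ) : Prop :=
  ∃ a0 a1 a2, O = {a0, a1, a2} ∧ IsTriangleTriple Q a0 a1 a2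

/-- Branch triangle: removing any two of its arrows disconnects the quiver. -/
def BranchTriangle (Q : QuivRel) (O : Finset ℕ) : Prop :=
  TriangleSet Q O ∧ ∀ S ⊆ O, S.card = 2 → ¬ Connected (deleteArrows Q S)

/-- Free relation: a relation neither of whose arrows lies in `𝒞`. -/
def FreeRel (Q : QuivRel) (st : SigmaTau Q) (ρ : ℕ × ℕ) : Prop :=
  ρ ∈ Q.rel ∧ ¬ InC Q st ρ.1 ∧ ¬ InC Q st ρ.2

/-- The class `𝒜`: gentle quivers with `f_𝚫 = m·[0,3] + [p+m+2, p]`. -/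
def ClassA (Q : QuivRel) (st : SigmaTau Q) : Prop :=
  IsGentle Q ∧ ∃ m p : ℕ, ∀ x, fInv Q st x = m * charFn 0 3 x + charFn (p + m + 2) p x

/-- The class `Ã`: gentle quivers with
`f_𝚫 = (m₁+m₂)·[0,3] + [p+m₁, p] + [q+m₂, q]`, `p+m₁ > 0`, `q+m₂ > 0`. -/
def ClassAtilde (Q : QuivRel) (st : SigmaTau Q) : Prop :=
  IsGentle Q ∧ ∃ m1 m2 p q : ℕ, 0 < p + m1 ∧ 0 < q + m2 ∧
    ∀ x, fInv Q st x =
      (m1 + m2) * charFn 0 3 x + charFn (p + m1) p x + charFn (q + m2) q x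

/-- Isomorphism of quivers with relations. -/
def IsoQR (Q Q' : QuivRel) : Prop :=
  ∃ fV fA : ℕ → ℕ,
    Set.BijOn fV ↑Q.V ↑Q'.V ∧ Set.BijOn fA ↑Q.A ↑Q'.A ∧
    (∀ a ∈ Q.A, Q'.src (fA a) = fV (Q.src a) ∧ Q'.tgt (fA a) = fV (Q.tgt a)) ∧
    (∀ a ∈ Q.A, ∀ b ∈ Q.A, ((a, b) ∈ Q.rel ↔ (fA a, fA b) ∈ Q'.rel))

/-- The quiver has no loops. -/
def NoLoops (Q : QuivRel) : Prop := ∀ a ∈ Q.A, Q.src a ≠ Q.tgt a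

/-- The reflection at `x` is defined: every arrow starting at `x` admits a
(necessarily unique) companion arrow ending at `x` not bound by a relation. -/
def CanReflect (Q : QuivRel) (x : ℕ) : Prop :=
  x ∈ Q.V ∧ ∀ a ∈ Q.A, Q.src a = x → ∃ b ∈ Q.A, Q.tgt b = x ∧ (a, b) ∉ Q.rel

/-- `Q'` is the reflection of the gentle loop-free quiver `Q` at the vertex
`x`, following Brenner–Butler tilting. -/
def IsReflection (Q : QuivRel) (x : ℕ) (Q' : QuivRel) : Prop :=
  IsGentle Q ∧ NoLoops Q ∧ CanReflect Q x ∧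
  Q'.V = Q.V ∧ Q'.A = Q.A ∧
  (∀ a ∈ Q.A, Q.tgt a = x → Q'.src a = x ∧ Q'.tgt a = Q.src a) ∧
  (∀ a ∈ Q.A, Q.src a = x →
    ∀ b ∈ Q.A, Q.tgt b = x → (a, b) ∉ Q.rel → Q'.src a = Q.src b) ∧
  (∀ a ∈ Q.A, Q.tgt a ≠ x → Q.src a ≠ x → Q'.src a = Q.src a) ∧
  (∀ a ∈ Q.A, Q.tgt a ≠ x →
    ((∃ b ∈ Q.A, Q.tgt b = x ∧ Q.src b = Q.tgt a ∧ (b, a) ∈ Q.rel) → Q'.tgt a = x) ∧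
    ((¬ ∃ b ∈ Q.A, Q.tgt b = x ∧ Q.src b = Q.tgt a ∧ (b, a) ∈ Q.rel) →
      Q'.tgt a = Q.tgt a)) ∧
  (∀ a b : ℕ, (a, b) ∈ Q'.rel ↔
    (((a, b) ∈ Q.rel ∧ Q.tgt a ≠ x ∧ Q.src a ≠ x) ∨
     (a ∈ Q.A ∧ b ∈ Q.A ∧ Q.src a = x ∧ Q.tgt b = x ∧ (a, b) ∉ Q.rel) ∨
     (a ∈ Q.A ∧ b ∈ Q.A ∧ Q.tgt a = x ∧
       ∃ c ∈ Q.A, c ≠ a ∧ Q.tgt c = x ∧ Q.src c = Q.tgt b ∧ (c, b) ∈ Q.rel)))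

/-- The opposite quiver with relations. -/
def opQR (Q : QuivRel) : QuivRel where
  V := Q.V
  A := Q.A
  src := Q.tgt
  tgt := Q.src
  rel := Q.rel.image fun ρ => (ρ.2, ρ.1)

/-- Coreflection: the dual of reflection. -/
def IsCoreflection (Q : QuivRel) (x : ℕ) (Q' : QuivRel) : Prop :=
  IsReflection (opQR Q) x (opQR Q')

/-- One step of reflection equivalence: a reflection, a coreflection, or an
isomorphism of quivers with relations. -/
def RefStep (Q Q' : QuivRel) : Prop :=
  (∃ x, IsReflection Q x Q') ∨ (∃ x, IsCoreflection Q x Q') ∨ IsoQR Q Q'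

/-- Reflection equivalence: a finite sequence of reflections/coreflections,
up to isomorphism of quivers with relations. -/
def RefEquiv : QuivRel → QuivRel → Prop := Relation.ReflTransGen RefStep

/-- A cyclic orientation of a `1`-cycle quiver without branch arrows (i.e. a
cycle): enumerations of the vertices and arrows by `ZMod n` such that the
`i`-th arrow joins the `i`-th and `(i+1)`-st vertices. -/
structure CyclicOrientation (Q : QuivRel) (n : ℕ) where
  ev : ZMod n → ℕ
  ea : ZMod n → ℕ
  ev_mem : ∀ i, ev i ∈ Q.V
  ea_mem : ∀ i, ea i ∈ Q.A
  ev_inj : Function.Injective ev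
  ea_inj : Function.Injective ea
  ev_surj : ∀ v ∈ Q.V, ∃ i, ev i = v
  ea_surj : ∀ a ∈ Q.A, ∃ i, ea i = a
  compat : ∀ i : ZMod n,
    (Q.src (ea i) = ev i ∧ Q.tgt (ea i) = ev (i + 1)) ∨
    (Q.src (ea i) = ev (i + 1) ∧ Q.tgt (ea i) = ev i)

/-- Clockwise arrow with respect to a cyclic orientation. -/
def Clockwise (Q : QuivRel) {n : ℕ} (co : CyclicOrientation Q n) (a : ℕ) : Prop :=
  a ∈ Q.A ∧ ∃ i : ZMod n, co.ea i = a ∧ Q.src a = co.ev i ∧ Q.tgt a = co.ev (i + 1)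

/-- Anticlockwise arrow with respect to a cyclic orientation. -/
def Anticlockwise (Q : QuivRel) {n : ℕ} (co : CyclicOrientation Q n) (a : ℕ) : Prop :=
  a ∈ Q.A ∧ ∃ i : ZMod n, co.ea i = a ∧ Q.src a = co.ev (i + 1) ∧ Q.tgt a = co.ev i

end GentleQuiv

namespace GentleQuiv

/-- Maximal chain of a relation (index form). -/
def MC (R : ℕ → ℕ → Prop) (l : List ℕ) : Prop :=
  0 < l.length ∧ (∀ i (h : i + 1 < l.length), R l[i] l[i+1]) ∧
  (∀ (h : 0 < l.length) b, ¬ R b l[0]) ∧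
  (∀ (h : l.length - 1 < l.length) c, ¬ R l[l.length - 1] c)

theorem chain_back {R : ℕ → ℕ → Prop} (hr : ∀ a b b', R b a → R b' a → b = b')
    {l l' : List ℕ} (h : ∀ i (h : i + 1 < l.length), R l[i] l[i+1])
    (h' : ∀ i (h : i + 1 < l'.length), R l'[i] l'[i+1]) :
    ∀ i d (hi : i < l.length) (hj : i + d < l'.length), l[i] = l'[i + d] →
      ∃ (h0 : 0 < l.length) (hd : d < l'.length), l[0] = l'[d] := by
  intro i
  induction i with
  | zero => intro d hi hj e; exact ⟨hi, by omega, by simpa using e⟩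
  | succ i ih =>
    intro d hi hj e
    apply ih d (by omega) (by omega)
    have h1 := h i hi
    have h2 := h' (i + d) (by omega)
    rw [e] at h1
    have e2 : l'[i + 1 + d] = l'[i + d + 1] := by congr 1; omega
    rw [e2] at h1
    exact hr _ _ _ h1 h2

theorem MC.index_eq {R : ℕ → ℕ → Prop} (hr : ∀ a b b', R b a → R b' a → b = b')
    {l l' : List ℕ} (h : MC R l) (h' : MC R l') {i j : ℕ} (hi : i < l.length)
    (hj : j < l'.length) (e : l[i] = l'[j]) : i = j := by
  have key : ∀ {l l' : List ℕ} (_ : MC R l) (_ : MC R l') {i j : ℕ} (hi : i < l.length)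
    (hj : j < l'.length) (_ : l[i] = l'[j]), j ≤ i := by
    intro l l' h h' i j hi hj e
    by_contra hlt
    obtain ⟨d, rfl⟩ : ∃ d, j = i + (d + 1) := ⟨j - i - 1, by omega⟩
    obtain ⟨h0, hd, e0⟩ := chain_back hr h.2.1 h'.2.1 i (d + 1) hi hj e
    refine h.2.2.1 h0 l'[d] ?_
    rw [e0]
    exact h'.2.1 d hd
  exact le_antisymm (key h' h hj hi e.symm) (key h h' hi hj e)

theorem MC.nodup {R : ℕ → ℕ → Prop} (hr : ∀ a b b', R b a → R b' a → b = b')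
    {l : List ℕ} (h : MC R l) : l.Nodup := by
  rw [List.nodup_iff_injective_get]
  intro i j e
  exact Fin.ext (h.index_eq hr h i.2 j.2 (by simpa using e))

theorem MC.eq_of_mem {R : ℕ → ℕ → Prop} (hr : ∀ a b b', R b a → R b' a → b = b')
    (hl : ∀ a b b', R a b → R a b' → b = b')
    {l l' : List ℕ} (h : MC R l) (h' : MC R l') {a : ℕ} (ha : a ∈ l) (ha' : a ∈ l') :
    l = l' := by
  obtain ⟨i, hi, rfl⟩ := List.getElem_of_mem ha
  obtain ⟨j, hj, e⟩ := List.getElem_of_mem ha'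
  have hij := h.index_eq hr h' hi hj e.symm
  subst hij
  obtain ⟨h0, h0', e0⟩ := chain_back hr h.2.1 h'.2.1 i 0 hi (by simpa using hj) (by simpa using e.symm)
  have key : ∀ k (hk : k < l.length) (hk' : k < l'.length), l[k] = l'[k] := by
    intro k
    induction k with
    | zero => intro _ _; exact e0
    | succ k ih =>
      intro hk hk'
      have h1 := h.2.1 k hk
      have h2 := h'.2.1 k hk'
      rw [ih (by omega) (by omega)] at h1
      exact hl _ _ _ h1 h2
  have len : ∀ {l l' : List ℕ} (_ : MC R l) (_ : MC R l')
      (_ : ∀ k (hk : k < l.length) (hk' : k < l'.length), l[k] = l'[k]), l'.length ≤ l.length := by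
    intro l l' h h' key
    by_contra hlt
    have h0 := h.1
    refine h.2.2.2 (by omega) l'[l.length - 1 + 1] ?_
    rw [key _ (by omega) (by omega)]
    exact h'.2.1 (l.length - 1) (by omega)
  apply List.ext_getElem
  · exact le_antisymm (len h' h fun k hk hk' => (key k hk' hk).symm) (len h h' key)
  · intro k hk hk'; exact key k hk hk'

/-- Every element of a finite set closed under `R` lies in a maximal chain or on a cycle. -/
theorem exists_chain {R : ℕ → ℕ → Prop} (hr : ∀ a b b', R b a → R b' a → b = b')
    (hl : ∀ a b b', R a b → R a b' → b = b') (A : Finset ℕ)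
    (hA : ∀ a b, R a b → a ∈ A ∧ b ∈ A) (a : ℕ) (ha : a ∈ A) :
    ∃ l : List ℕ, (∀ x ∈ l, x ∈ A) ∧ a ∈ l ∧ (∀ i (h : i + 1 < l.length), R l[i] l[i+1]) ∧
      (MC R l ∨ ∃ (h0 : 0 < l.length) (h1 : l.length - 1 < l.length), R l[l.length - 1] l[0]) := by
  let P : ℕ → Prop := fun n => ∃ l : List ℕ, l.length = n ∧ l.Nodup ∧ (∀ x ∈ l, x ∈ A) ∧ a ∈ l ∧
    (∀ i (h : i + 1 < l.length), R l[i] l[i+1])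
  have hP1 : P 1 := ⟨[a], rfl, by simp, by simpa using ha, by simp, by intro i h; simp at h⟩
  have hb : ∀ n, P n → n ≤ A.card := by
    rintro n ⟨l, rfl, hn, hm, -, -⟩
    rw [← List.toFinset_card_of_nodup hn]
    exact Finset.card_le_card (fun x hx => hm x (by simpa using hx))
  classical
  have hspec : P (Nat.findGreatest P A.card) := Nat.findGreatest_spec (hb 1 hP1) hP1
  have hmax : ∀ n, P n → n ≤ Nat.findGreatest P A.card := fun n hn =>
    Nat.le_findGreatest (hb n hn) hn
  obtain ⟨l, hlen, hn, hm, hal, hc⟩ := hspec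
  refine ⟨l, hm, hal, hc, ?_⟩
  have h0 : 0 < l.length := List.length_pos_of_mem hal
  by_cases hcyc : R l[l.length - 1] l[0]
  · exact Or.inr ⟨h0, by omega, hcyc⟩
  left
  refine ⟨h0, hc, ?_, ?_⟩
  · intro _ b hR
    have hbl : b ∈ l := by
      by_contra hbl
      have := hmax (l.length + 1) ⟨b :: l, by simp, by simp [hbl, hn], by
        intro x hx; rcases List.mem_cons.1 hx with rfl | hx
        · exact (hA _ _ hR).1
        · exact hm x hx, by simp [hal], by
        intro i h
        rcases i with _ | i
        · simpa using hR
        · simpa using hc i (by simpa using h)⟩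
      omega
    obtain ⟨i, hi, rfl⟩ := List.getElem_of_mem hbl
    by_cases hi' : i + 1 < l.length
    · have := hl _ _ _ (hc i hi') hR
      have := (List.Nodup.getElem_inj_iff hn).1 this
      omega
    · have : i = l.length - 1 := by omega
      subst this
      exact hcyc hR
  · intro _ c hR
    have hcl : c ∈ l := by
      by_contra hcl
      have := hmax (l.length + 1) ⟨l ++ [c], by simp, by
        rw [List.nodup_append]; simp [hn]; intro x hx e; exact hcl (e ▸ hx), by
        intro x hx; rcases List.mem_append.1 hx with hx | hx
        · exact hm x hx
        · rw [List.mem_singleton.1 hx]; exact (hA _ _ hR).2, by simp [hal], by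
        intro i h
        simp at h
        by_cases hi : i + 1 < l.length
        · rw [List.getElem_append_left (by omega), List.getElem_append_left hi]; exact hc i hi
        · have : i = l.length - 1 := by omega
          subst this
          rw [List.getElem_append_left (by omega), List.getElem_append_right (by omega)]
          simpa using hR⟩
      omega
    obtain ⟨i, hi, rfl⟩ := List.getElem_of_mem hcl
    rcases i with _ | i
    · exact hcyc hR
    · have := hr _ _ _ (hc i hi) hR
      have := (List.Nodup.getElem_inj_iff hn).1 this
      omega

/-- A chain closing up to a cycle: every element has a predecessor and a successor in it. -/
theorem cycle_closed {R : ℕ → ℕ → Prop} {l : List ℕ}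
    (hc : ∀ i (h : i + 1 < l.length), R l[i] l[i+1])
    (hcyc : ∃ (h0 : 0 < l.length) (h1 : l.length - 1 < l.length), R l[l.length - 1] l[0]) :
    ∀ x ∈ l, (∃ y ∈ l, R y x) ∧ ∃ y ∈ l, R x y := by
  obtain ⟨h0, h1, hR⟩ := hcyc
  intro x hx
  obtain ⟨i, hi, rfl⟩ := List.getElem_of_mem hx
  constructor
  · rcases i with _ | i
    · exact ⟨_, List.getElem_mem _, hR⟩
    · exact ⟨_, List.getElem_mem _, hc i hi⟩
  · by_cases hi' : i + 1 < l.length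
    · exact ⟨_, List.getElem_mem _, hc i hi'⟩
    · have : i = l.length - 1 := by omega
      subst this
      exact ⟨_, List.getElem_mem _, hR⟩

/-- A set in which everybody has a predecessor is disjoint from maximal chains. -/
theorem MC.not_mem {R : ℕ → ℕ → Prop} (hr : ∀ a b b', R b a → R b' a → b = b')
    {l : List ℕ} (h : MC R l) (T : Set ℕ) (hT : ∀ x ∈ T, ∃ y ∈ T, R y x) :
    ∀ x ∈ l, x ∉ T := by
  intro x hx
  obtain ⟨i, hi, rfl⟩ := List.getElem_of_mem hx
  clear hx
  induction i with
  | zero => intro hx; obtain ⟨y, -, hy⟩ := hT _ hx; exact h.2.2.1 hi y hy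
  | succ i ih =>
    intro hx
    obtain ⟨y, hyT, hy⟩ := hT _ hx
    have := hr _ _ _ hy (h.2.1 i hi)
    exact ih (by omega) (this ▸ hyT)

theorem cls_sum {T : Type*} (s : Finset T) (r : T → T → Prop)
    (hr : ∀ x y, r x y → x ∈ s ∧ y ∈ s) [DecidableEq (Set T)] (g : T → ℕ) :
    (∑ O ∈ s.image (fun w => {w' | Relation.EqvGen r w w'}), ∑ᶠ w ∈ O, g w) = ∑ w ∈ s, g w := by
  classical
  have hs : ∀ x y, Relation.EqvGen r x y → (x ∈ s ↔ y ∈ s) := by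
    intro x y h
    induction h with
    | rel x y h => exact ⟨fun _ => (hr _ _ h).2, fun _ => (hr _ _ h).1⟩
    | refl => exact Iff.rfl
    | symm _ _ _ ih => exact ih.symm
    | trans _ _ _ _ _ ih1 ih2 => exact ih1.trans ih2
  rw [← Finset.sum_fiberwise_of_maps_to (s := s)
    (t := s.image (fun w => {w' | Relation.EqvGen r w w'}))
    (g := fun w => {w' | Relation.EqvGen r w w'}) (fun x hx => Finset.mem_image_of_mem _ hx)]
  apply Finset.sum_congr rfl
  intro O hO
  obtain ⟨w, hw, rfl⟩ := Finset.mem_image.1 hO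
  have key : {w' | Relation.EqvGen r w w'} =
      ((s.filter fun a => {w' | Relation.EqvGen r a w'} = {w' | Relation.EqvGen r w w'} :
        Finset T) : Set T) := by
    ext x
    simp only [Set.mem_ofPred_eq, Finset.coe_filter]
    constructor
    · intro h
      refine ⟨(hs _ _ h).1 hw, ?_⟩
      ext y
      exact ⟨fun h' => h.trans _ _ _ h', fun h' => (h.symm).trans _ _ _ h'⟩
    · rintro ⟨_, h⟩
      have : x ∈ {w' | Relation.EqvGen r x w'} := Relation.EqvGen.refl x
      rw [h] at this
      exact this
  rw [← finsum_mem_coe_finset, ← key]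

theorem cls_ncard {T : Type*} (s : Finset T) (r : T → T → Prop)
    (hr : ∀ x y, r x y → x ∈ s ∧ y ∈ s) [DecidableEq (Set T)] :
    (∑ O ∈ s.image (fun w => {w' | Relation.EqvGen r w w'}), O.ncard) = s.card := by
  have h := cls_sum s r hr (fun _ => 1)
  rw [Finset.card_eq_sum_ones, ← h]
  apply Finset.sum_congr rfl
  intro O hO
  simp
theorem mem_rel_iff {Q : QuivRel} (st : SigmaTau Q) (hG : IsGentle Q) (a b : ℕ) :
    (a, b) ∈ Q.rel ↔ a ∈ Q.A ∧ b ∈ Q.A ∧ Q.src a = Q.tgt b ∧ st.σ a = st.τ b := by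
  constructor
  · intro h
    obtain ⟨h1, h2, h3⟩ := hG.2.2.2.1 _ h
    exact ⟨h1, h2, h3, (st.rel_iff a h1 b h2 h3).1 h⟩
  · rintro ⟨h1, h2, h3, h4⟩
    exact (st.rel_iff a h1 b h2 h3).2 h4

theorem src_inj {Q : QuivRel} (st : SigmaTau Q) {a b : ℕ} (ha : a ∈ Q.A) (hb : b ∈ Q.A)
    (h : Q.src a = Q.src b) (h' : st.σ a = st.σ b) : a = b := by
  by_contra hne
  have := st.σ_src a ha b hb hne h
  have := st.σ_pm b hb
  omega

theorem tgt_inj {Q : QuivRel} (st : SigmaTau Q) {a b : ℕ} (ha : a ∈ Q.A) (hb : b ∈ Q.A)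
    (h : Q.tgt a = Q.tgt b) (h' : st.τ a = st.τ b) : a = b := by
  by_contra hne
  have := st.τ_tgt a ha b hb hne h
  have := st.τ_pm b hb
  omega

theorem rel_right {Q : QuivRel} (st : SigmaTau Q) (hG : IsGentle Q) :
    ∀ a b b', (b, a) ∈ Q.rel → (b', a) ∈ Q.rel → b = b' := by
  intro a b b' h h'
  rw [mem_rel_iff st hG] at h h'
  exact src_inj st h.1 h'.1 (h.2.2.1.trans h'.2.2.1.symm) (h.2.2.2.trans h'.2.2.2.symm)

theorem rel_left {Q : QuivRel} (st : SigmaTau Q) (hG : IsGentle Q) :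
    ∀ a b b', (a, b) ∈ Q.rel → (a, b') ∈ Q.rel → b = b' := by
  intro a b b' h h'
  rw [mem_rel_iff st hG] at h h'
  exact tgt_inj st h.2.1 h'.2.1 (h.2.2.1.symm.trans h'.2.2.1) (h.2.2.2.symm.trans h'.2.2.2)

theorem inN_arrows {Q : QuivRel} (st : SigmaTau Q) (hG : IsGentle Q) (l : List ℕ) :
    InN Q st (.arrows l) ↔ (∀ a ∈ l, a ∈ Q.A) ∧ MC (fun a b => (a, b) ∈ Q.rel) l := by
  unfold InN MC IsAntiThread IsAntiList Thread.target Thread.source Thread.tauAnti Thread.sigma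
  simp only [List.Chain', List.isChain_iff_getElem, ne_eq, List.head!_eq_getElem!,
    List.getLast!_eq_getElem!]
  by_cases h0 : 0 < l.length
  · have h1 : l.length - 1 < l.length := by omega
    have hne : l ≠ [] := List.length_pos_iff.1 h0
    rw [getElem!_pos l 0 h0, getElem!_pos l _ h1]
    simp only [mem_rel_iff st hG]
    constructor
    · rintro ⟨⟨_, hm, hc⟩, ha, hb⟩
      refine ⟨hm, h0, hc, ?_, ?_⟩
      · rintro _ b ⟨x1, x2, x3, x4⟩; exact ha ⟨b, x1, x3, x4⟩
      · rintro _ b ⟨x1, x2, x3, x4⟩; exact hb ⟨b, x2, x3.symm, x4.symm⟩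
    · rintro ⟨hm, _, hc, ha, hb⟩
      refine ⟨⟨hne, hm, hc⟩, ?_, ?_⟩
      · rintro ⟨b, x1, x3, x4⟩; exact ha h0 b ⟨x1, hm _ (List.getElem_mem _), x3, x4⟩
      · rintro ⟨b, x2, x3, x4⟩; exact hb h1 b ⟨hm _ (List.getElem_mem _), x2, x3.symm, x4.symm⟩
  · have : l = [] := by simpa using h0
    subst this
    simp

theorem inN_triv {Q : QuivRel} (st : SigmaTau Q) (x : ℕ) (ε : ℤ) :
    InN Q st (.triv x ε) ↔ (x ∈ Q.V ∧ (ε = 1 ∨ ε = -1)) ∧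
      (∀ a ∈ Q.A, Q.src a = x → st.σ a ≠ ε) ∧ (∀ a ∈ Q.A, Q.tgt a = x → st.τ a ≠ ε) := by
  unfold InN IsAntiThread Thread.target Thread.source Thread.tauAnti Thread.sigma
  simp only [not_exists, not_and, ne_eq]

/-- Free slots: pairs `(x, ε)` without an arrow starting in it. -/
def slots (Q : QuivRel) (st : SigmaTau Q) : Finset (ℕ × ℤ) :=
  (Q.V ×ˢ {1, -1}) \ Q.A.image (fun a => (Q.src a, st.σ a))

theorem slots_card {Q : QuivRel} (st : SigmaTau Q) (hG : IsGentle Q) :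
    (slots Q st).card + Q.A.card = 2 * Q.V.card := by
  have hsub : Q.A.image (fun a => (Q.src a, st.σ a)) ⊆ Q.V ×ˢ {1, -1} := by
    intro x hx
    obtain ⟨a, ha, rfl⟩ := Finset.mem_image.1 hx
    have := st.σ_pm a ha
    simp [(hG.2.1 a ha).1, this]
  have hc : (Q.A.image (fun a => (Q.src a, st.σ a))).card = Q.A.card := by
    apply Finset.card_image_of_injOn
    intro a ha b hb e
    simp only [Prod.mk.injEq] at e
    exact src_inj st ha hb e.1 e.2
  have := Finset.card_sdiff_add_card_eq_card hsub
  rw [hc, Finset.card_product] at this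
  unfold slots
  rw [this, mul_comm]
  rfl

theorem N_bij {Q : QuivRel} (st : SigmaTau Q) (hG : IsGentle Q) :
    Set.BijOn (fun w : Thread => (w.target Q, w.tauAnti st)) {w | InN Q st w} (slots Q st) := by
  have hr := rel_right st hG
  have hl := rel_left st hG
  refine ⟨?_, ?_, ?_⟩
  · intro w hw
    have hw' : InN Q st w := hw
    simp only [slots, Finset.coe_sdiff, Set.mem_sdiff, Finset.mem_coe, Finset.mem_product,
      Finset.mem_image, not_exists, not_and]
    constructor
    · cases w with
      | triv x ε =>
        rw [inN_triv] at hw'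
        simpa [Thread.target, Thread.tauAnti] using hw'.1
      | arrows l =>
        rw [inN_arrows st hG] at hw'
        have hm : l.head! ∈ Q.A := hw'.1 _ (List.head!_mem_self (List.length_pos_iff.1 hw'.2.1))
        have := st.τ_pm _ hm
        have h2 := (hG.2.1 _ hm).2
        simp only [Thread.target, Thread.tauAnti]
        exact ⟨h2, by simpa using this⟩
    · intro a ha e
      simp only [Prod.mk.injEq] at e
      exact hw'.2.1 ⟨a, ha, e⟩
  · intro w hw w' hw' e
    have h1 : InN Q st w := hw
    have h2 : InN Q st w' := hw'
    simp only [Prod.mk.injEq] at e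
    cases w with
    | triv x ε =>
      cases w' with
      | triv x' ε' => simp only [Thread.target, Thread.tauAnti] at e; rw [e.1, e.2]
      | arrows l =>
        rw [inN_triv] at h1
        rw [inN_arrows st hG] at h2
        have hm : l.head! ∈ Q.A := h2.1 _ (List.head!_mem_self (List.length_pos_iff.1 h2.2.1))
        exact (h1.2.2 _ hm e.1.symm e.2.symm).elim
    | arrows l =>
      rw [inN_arrows st hG] at h1
      have hm := List.head!_mem_self (List.length_pos_iff.1 h1.2.1)
      cases w' with
      | triv x ε =>
        rw [inN_triv] at h2
        exact (h2.2.2 _ (h1.1 _ hm) e.1 e.2).elim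
      | arrows l' =>
        rw [inN_arrows st hG] at h2
        have hm' := List.head!_mem_self (List.length_pos_iff.1 h2.2.1)
        have : l.head! = l'.head! := tgt_inj st (h1.1 _ hm) (h2.1 _ hm') e.1 e.2
        rw [MC.eq_of_mem hr hl h1.2 h2.2 hm (this ▸ hm')]
  · rintro ⟨x, ε⟩ hx
    simp only [slots, Finset.coe_sdiff, Set.mem_sdiff, Finset.mem_coe, Finset.mem_product,
      Finset.mem_image, not_exists, not_and, Finset.mem_insert, Finset.mem_singleton,
      Prod.mk.injEq] at hx
    by_cases hb : ∃ b ∈ Q.A, Q.tgt b = x ∧ st.τ b = ε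
    · obtain ⟨b, hbA, rfl, rfl⟩ := hb
      have hnp : ∀ a, (a, b) ∉ Q.rel := by
        intro a h
        rw [mem_rel_iff st hG] at h
        exact hx.2 a h.1 h.2.2.1 h.2.2.2
      obtain ⟨l, hlA, hbl, hc, hmc⟩ := exists_chain (R := fun a b => (a, b) ∈ Q.rel) hr hl Q.A
        (fun a b h => ⟨(hG.2.2.2.1 _ h).1, (hG.2.2.2.1 _ h).2.1⟩) b hbA
      rcases hmc with hmc | hcyc
      · refine ⟨.arrows l, (inN_arrows st hG l).2 ⟨hlA, hmc⟩, ?_⟩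
        have : l.head! = b := by
          obtain ⟨i, hi, e⟩ := List.getElem_of_mem hbl
          rcases i with _ | i
          · rw [List.head!_eq_getElem!, getElem!_pos l 0 hi, e]
          · exact (hnp l[i] (e ▸ hc i hi)).elim
        simp only [Thread.target, Thread.tauAnti, this]
      · obtain ⟨⟨y, _, hy⟩, _⟩ := cycle_closed (R := fun a b => (a, b) ∈ Q.rel) hc hcyc b hbl
        exact (hnp y hy).elim
    · refine ⟨.triv x ε, (inN_triv st x ε).2 ⟨hx.1, ?_, ?_⟩, rfl⟩
      · intro a ha e e'; exact hx.2 a ha e e'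
      · intro a ha e e'; exact hb ⟨a, ha, e, e'⟩

theorem N_finite {Q : QuivRel} (st : SigmaTau Q) (hG : IsGentle Q) :
    {w | InN Q st w}.Finite :=
  (Set.BijOn.finite_iff_finite (N_bij st hG)).2 (Finset.finite_toSet _)

/-- The finite set of maximal antipaths. -/
noncomputable def NF (Q : QuivRel) (st : SigmaTau Q) (hG : IsGentle Q) : Finset Thread :=
  (N_finite st hG).toFinset

theorem mem_NF {Q : QuivRel} (st : SigmaTau Q) (hG : IsGentle Q) (w : Thread) :
    w ∈ NF Q st hG ↔ InN Q st w := by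
  simp [NF]

theorem NF_card {Q : QuivRel} (st : SigmaTau Q) (hG : IsGentle Q) :
    (NF Q st hG).card + Q.A.card = 2 * Q.V.card := by
  rw [← slots_card st hG]
  congr 1
  apply Set.BijOn.finsetCard_eq (fun w : Thread => (w.target Q, w.tauAnti st))
  have := N_bij st hG
  simpa [NF] using this

open Classical in
/-- The finite set `𝒞`. -/
noncomputable def CF (Q : QuivRel) (st : SigmaTau Q) : Finset ℕ :=
  Q.A.filter (fun a => InC Q st a)

theorem mem_CF {Q : QuivRel} (st : SigmaTau Q) (a : ℕ) : a ∈ CF Q st ↔ InC Q st a := by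
  simp only [CF, Finset.mem_filter]
  exact ⟨fun h => h.2, fun h => ⟨h.1, h⟩⟩

theorem total_len {Q : QuivRel} (st : SigmaTau Q) (hG : IsGentle Q) :
    (∑ w ∈ NF Q st hG, w.len) + (CF Q st).card = Q.A.card := by
  classical
  have hr := rel_right st hG
  have hl := rel_left st hG
  let S : Thread → Finset ℕ := fun w => match w with
    | .triv _ _ => ∅
    | .arrows l => l.toFinset
  have hS : ∀ w ∈ NF Q st hG, w.len = (S w).card := by
    intro w hw
    cases w with
    | triv => rfl
    | arrows l =>
      rw [mem_NF, inN_arrows st hG] at hw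
      exact (List.toFinset_card_of_nodup (hw.2.nodup hr)).symm
  rw [Finset.sum_congr rfl hS, ← Finset.card_biUnion]
  · have : (NF Q st hG).biUnion S = Q.A \ CF Q st := by
      ext a
      simp only [Finset.mem_biUnion, Finset.mem_sdiff, mem_CF, InC, not_and, not_not]
      constructor
      · rintro ⟨w, hw, ha⟩
        cases w with
        | triv => simp [S] at ha
        | arrows l =>
          have ha' : a ∈ l := by simpa [S] using ha
          rw [mem_NF] at hw
          exact ⟨((inN_arrows st hG l).1 hw).1 a ha', fun _ => ⟨l, hw, ha'⟩⟩
      · rintro ⟨ha, h⟩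
        obtain ⟨l, h1, h2⟩ := h ha
        exact ⟨.arrows l, (mem_NF st hG _).2 h1, by simpa [S] using h2⟩
    rw [this]
    exact Finset.card_sdiff_add_card_eq_card (Finset.filter_subset _ _)
  · intro w hw w' hw' hne
    rw [Function.onFun, Finset.disjoint_left]
    intro a ha ha'
    cases w with
    | triv => simp [S] at ha
    | arrows l =>
      cases w' with
      | triv => simp [S] at ha'
      | arrows l' =>
        simp only [Finset.mem_coe, mem_NF, inN_arrows st hG] at hw hw'
        exact hne (by rw [MC.eq_of_mem hr hl hw.2 hw'.2 (by simpa [S] using ha)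
          (by simpa [S] using ha')])

theorem C_closed {Q : QuivRel} (st : SigmaTau Q) (hG : IsGentle Q) {a : ℕ} (ha : InC Q st a) :
    (∃ b, InC Q st b ∧ (b, a) ∈ Q.rel) ∧ ∃ b, InC Q st b ∧ (a, b) ∈ Q.rel := by
  have hr := rel_right st hG
  have hl := rel_left st hG
  obtain ⟨l, hlA, hal, hc, hmc⟩ := exists_chain (R := fun a b => (a, b) ∈ Q.rel) hr hl Q.A
    (fun a b h => ⟨(hG.2.2.2.1 _ h).1, (hG.2.2.2.1 _ h).2.1⟩) a ha.1
  rcases hmc with hmc | hcyc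
  · exact (ha.2 ⟨l, (inN_arrows st hG l).2 ⟨hlA, hmc⟩, hal⟩).elim
  · have hcl := cycle_closed (R := fun a b => (a, b) ∈ Q.rel) hc hcyc
    have hC : ∀ x ∈ l, InC Q st x := by
      intro x hx
      refine ⟨hlA x hx, ?_⟩
      rintro ⟨l', hl', hx'⟩
      exact MC.not_mem hr ((inN_arrows st hG l').1 hl').2 {y | y ∈ l} (fun y hy => (hcl y hy).1)
        x hx' hx
    obtain ⟨⟨b, hb, h1⟩, ⟨c, hc', h2⟩⟩ := hcl a hal
    exact ⟨⟨b, hC b hb, h1⟩, ⟨c, hC c hc', h2⟩⟩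

theorem psi_iff {Q : QuivRel} (st : SigmaTau Q) (hG : IsGentle Q) (a b : ℕ) :
    PsiRel Q st a b ↔ InC Q st a ∧ InC Q st b ∧ (a, b) ∈ Q.rel := by
  unfold PsiRel
  rw [mem_rel_iff st hG]
  constructor
  · rintro ⟨h1, h2, h3, h4⟩; exact ⟨h1, h2, h1.1, h2.1, h3.symm, h4.symm⟩
  · rintro ⟨h1, h2, _, _, h3, h4⟩; exact ⟨h1, h2, h3.symm, h4.symm⟩

theorem class_subset {r : ℕ → ℕ → Prop} (S : Set ℕ)
    (hS : ∀ x y, r x y → (x ∈ S ↔ y ∈ S)) {a b : ℕ} (h : Relation.EqvGen r a b) :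
    a ∈ S ↔ b ∈ S := by
  induction h with
  | rel x y h => exact hS x y h
  | refl => exact Iff.rfl
  | symm _ _ _ ih => exact ih.symm
  | trans _ _ _ _ _ ih1 ih2 => exact ih1.trans ih2

theorem COrbit_eq {Q : QuivRel} {st : SigmaTau Q} {O : Set ℕ} (hO : COrbit Q st O) {a : ℕ}
    (ha : a ∈ O) : InC Q st a ∧ O = {b | Relation.EqvGen (PsiRel Q st) a b} := by
  obtain ⟨c, hc, rfl⟩ := hO
  have ha' : Relation.EqvGen (PsiRel Q st) c a := ha
  refine ⟨?_, ?_⟩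
  · exact (class_subset {x | InC Q st x} (fun x y h => ⟨fun _ => h.2.1, fun _ => h.1⟩) ha').1 hc
  · ext y
    exact ⟨fun h => (ha'.symm).trans _ _ _ h, fun h => ha'.trans _ _ _ h⟩

theorem triangle_orbit {Q : QuivRel} (st : SigmaTau Q) (hG : IsGentle Q) {T : Finset ℕ}
    (hT : TriangleSet Q T) : COrbit Q st (T : Set ℕ) ∧ (T : Set ℕ).ncard = 3 := by
  have hr := rel_right st hG
  have hl := rel_left st hG
  obtain ⟨a0, a1, a2, rfl, ⟨h0, h1, h2, n01, n12, n02, -⟩, r01, r12, r20⟩ := hT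
  have hC : ∀ x ∈ ({a0, a1, a2} : Set ℕ), InC Q st x := by
    intro x hx
    refine ⟨by rcases hx with rfl | rfl | rfl <;> assumption, ?_⟩
    rintro ⟨l', hl', hx'⟩
    refine MC.not_mem hr ((inN_arrows st hG l').1 hl').2 {a0, a1, a2} ?_ x hx' hx
    rintro y (rfl | rfl | rfl)
    · exact ⟨a2, by simp, r20⟩
    · exact ⟨a0, by simp, r01⟩
    · exact ⟨a1, by simp, r12⟩
  have c0 := hC a0 (by simp)
  have c1 := hC a1 (by simp)
  have c2 := hC a2 (by simp)
  constructor
  · refine ⟨a0, c0, ?_⟩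
    ext y
    simp only [Finset.coe_insert, Finset.coe_singleton]
    constructor
    · have e1 : Relation.EqvGen (PsiRel Q st) a0 a1 :=
        .rel _ _ ((psi_iff st hG _ _).2 ⟨c0, c1, r01⟩)
      have e2 : Relation.EqvGen (PsiRel Q st) a1 a2 :=
        .rel _ _ ((psi_iff st hG _ _).2 ⟨c1, c2, r12⟩)
      rintro (rfl | rfl | rfl)
      · exact .refl _
      · exact e1
      · exact e1.trans _ _ _ e2
    · intro h
      refine (class_subset ({a0, a1, a2} : Set ℕ) ?_ h).1 (by simp)
      intro x y h
      have hxy := ((psi_iff st hG _ _).1 h).2.2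
      constructor
      · rintro (rfl | rfl | rfl)
        · rw [hl _ _ _ hxy r01]; simp
        · rw [hl _ _ _ hxy r12]; simp
        · rw [hl _ _ _ hxy r20]; simp
      · rintro (rfl | rfl | rfl)
        · rw [hr _ _ _ hxy r20]; simp
        · rw [hr _ _ _ hxy r01]; simp
        · rw [hr _ _ _ hxy r12]; simp
  · rw [Set.ncard_coe_finset]
    exact Finset.card_eq_three.2 ⟨a0, a1, a2, n01, n02, n12, rfl⟩

theorem orbit_triangle {Q : QuivRel} (st : SigmaTau Q) (hG : IsGentle Q) {O : Set ℕ}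
    (hO : COrbit Q st O) (h3 : O.ncard = 3) : ∃ T : Finset ℕ, TriangleSet Q T ∧ (T : Set ℕ) = O := by
  have hr := rel_right st hG
  have hl := rel_left st hG
  have hO' := hO
  obtain ⟨a0, c0, hOe⟩ := hO
  have cl : ∀ x ∈ O, ∀ y, InC Q st x → InC Q st y → (x, y) ∈ Q.rel → y ∈ O := by
    intro x hx y h1 h2 h
    rw [hOe] at hx ⊢
    exact Relation.EqvGen.trans _ _ _ hx (.rel _ _ ((psi_iff st hG _ _).2 ⟨h1, h2, h⟩))
  have m0 : a0 ∈ O := by rw [hOe]; exact .refl _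
  have sub : ∀ S : Set ℕ, a0 ∈ S → (∀ x y, (x, y) ∈ Q.rel → (x ∈ S ↔ y ∈ S)) → O ⊆ S := by
    intro S h0 hS y hy
    rw [hOe] at hy
    exact (class_subset S (fun x y h => hS x y ((psi_iff st hG _ _).1 h).2.2) hy).1 h0
  obtain ⟨-, a1, c1, r01⟩ := C_closed st hG c0
  obtain ⟨-, a2, c2, r12⟩ := C_closed st hG c1
  obtain ⟨-, a3, c3, r23⟩ := C_closed st hG c2
  have m1 := cl _ m0 _ c0 c1 r01
  have m2 := cl _ m1 _ c1 c2 r12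
  have m3 := cl _ m2 _ c2 c3 r23
  have n01 : a0 ≠ a1 := by
    rintro rfl
    have := Set.ncard_le_ncard (sub {a0} (by simp) (by
      intro x y h
      simp only [Set.mem_singleton_iff]
      constructor
      · rintro rfl; exact hl _ _ _ h r01
      · rintro rfl; exact hr _ _ _ h r01)) (Set.toFinite _)
    rw [Set.ncard_singleton] at this
    omega
  have n12 : a1 ≠ a2 := by
    rintro rfl
    exact n01 (hr _ _ _ r01 r12)
  have n02 : a0 ≠ a2 := by
    rintro rfl
    have := Set.ncard_le_ncard (sub {a0, a1} (by simp) (by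
      intro x y h
      simp only [Set.mem_singleton_iff, Set.mem_insert_iff]
      constructor
      · rintro (rfl | rfl)
        · exact Or.inr (hl _ _ _ h r01)
        · exact Or.inl (hl _ _ _ h r12)
      · rintro (rfl | rfl)
        · exact Or.inr (hr _ _ _ h r12)
        · exact Or.inl (hr _ _ _ h r01))) (Set.toFinite _)
    rw [Set.ncard_pair n01] at this
    omega
  have hcard : ({a0, a1, a2} : Finset ℕ).card = 3 :=
    Finset.card_eq_three.2 ⟨a0, a1, a2, n01, n02, n12, rfl⟩
  have hsub : (({a0, a1, a2} : Finset ℕ) : Set ℕ) ⊆ O := by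
    intro x hx
    simp only [Finset.coe_insert, Finset.coe_singleton] at hx
    rcases hx with rfl | rfl | rfl <;> assumption
  have heq : (({a0, a1, a2} : Finset ℕ) : Set ℕ) = O :=
    Set.eq_of_subset_of_ncard_le hsub (by rw [Set.ncard_coe_finset, hcard, h3])
      (Set.finite_of_ncard_ne_zero (by omega))
  refine ⟨{a0, a1, a2}, ⟨a0, a1, a2, rfl, ?_⟩, heq⟩
  have e3 : a3 = a0 := by
    rw [← heq] at m3
    simp only [Finset.coe_insert, Finset.coe_singleton] at m3
    rcases m3 with h | h | h
    · exact h
    · subst h; exact (n02 (hr _ _ _ r01 r23)).elim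
    · rw [Set.mem_singleton_iff] at h
      subst h; exact (n12 (hr _ _ _ r12 r23)).elim
  subst e3
  refine ⟨⟨c0.1, c1.1, c2.1, n01, n12, n02, ?_, ?_, ?_⟩, r01, r12, r23⟩
  · exact (hG.2.2.2.1 _ r01).2.2
  · exact (hG.2.2.2.1 _ r12).2.2
  · exact (hG.2.2.2.1 _ r23).2.2

theorem triangle_other {Q : QuivRel} {T : Finset ℕ} (hT : TriangleSet Q T) {a : ℕ} (ha : a ∈ T) :
    ∃ b ∈ T, ∃ c ∈ T, a ∈ Q.A ∧ b ∈ Q.A ∧ c ∈ Q.A ∧ b ≠ a ∧ c ≠ a ∧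
      Q.src a = Q.tgt b ∧ Q.src b = Q.tgt c ∧ Q.src c = Q.tgt a := by
  obtain ⟨a0, a1, a2, rfl, ⟨h0, h1, h2, n01, n12, n02, e1, e2, e3⟩, -⟩ := hT
  simp only [Finset.mem_insert, Finset.mem_singleton] at ha
  rcases ha with rfl | rfl | rfl
  · exact ⟨a1, by simp, a2, by simp, h0, h1, h2, n01.symm, n02.symm, e1, e2, e3⟩
  · exact ⟨a2, by simp, a0, by simp, h1, h2, h0, n12.symm, n01, e2, e3, e1⟩
  · exact ⟨a0, by simp, a1, by simp, h2, h0, h1, n02, n12, e3, e1, e2⟩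

open Classical in
theorem weight_sum {Q : QuivRel} (st : SigmaTau Q) (hG : IsGentle Q) (m1 m2 p q : ℕ)
    (hf : ∀ x, fInv Q st x =
      (m1 + m2) * charFn 0 3 x + charFn (p + m1) p x + charFn (q + m2) q x) (g : ℕ × ℕ → ℕ) :
    (∑ O ∈ (NF Q st hG).image (fun w => {w' | Relation.EqvGen (PhiRel Q st) w w'}),
        g (pN O, qN O)) +
      (∑ O ∈ (CF Q st).image (fun w => {w' | Relation.EqvGen (PsiRel Q st) w w'}),
        g (0, O.ncard)) =
    (m1 + m2) * g (0, 3) + g (p + m1, p) + g (q + m2, q) := by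
  set FN := (NF Q st hG).image (fun w => {w' | Relation.EqvGen (PhiRel Q st) w w'}) with hFN
  set FC := (CF Q st).image (fun w => {w' | Relation.EqvGen (PsiRel Q st) w w'}) with hFC
  have mFN : ∀ O, O ∈ FN ↔ NOrbit Q st O := by
    intro O
    simp only [hFN, Finset.mem_image, mem_NF, NOrbit]
    exact ⟨fun ⟨w, h, e⟩ => ⟨w, h, e.symm⟩, fun ⟨w, h, e⟩ => ⟨w, h, e.symm⟩⟩
  have mFC : ∀ O, O ∈ FC ↔ COrbit Q st O := by
    intro O
    simp only [hFC, Finset.mem_image, mem_CF, COrbit]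
    exact ⟨fun ⟨w, h, e⟩ => ⟨w, h, e.symm⟩, fun ⟨w, h, e⟩ => ⟨w, h, e.symm⟩⟩
  let kN : Set Thread → ℕ × ℕ := fun O => (pN O, qN O)
  let kC : Set ℕ → ℕ × ℕ := fun O => (0, O.ncard)
  have hf' : ∀ x, fInv Q st x = (FN.filter (fun O => kN O = x)).card +
      (FC.filter (fun O => kC O = x)).card := by
    rintro ⟨x, y⟩
    unfold fInv
    congr 1
    · rw [← Set.ncard_coe_finset]
      congr 1
      ext O
      simp [mFN, kN]
    · rw [← Set.ncard_coe_finset]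
      congr 1
      ext O
      simp [mFC, kC, eq_comm]
  let B : Finset (ℕ × ℕ) := FN.image kN ∪ FC.image kC ∪ {(0, 3), (p + m1, p), (q + m2, q)}
  have hL : ∑ x ∈ B, fInv Q st x * g x = (∑ O ∈ FN, g (kN O)) + ∑ O ∈ FC, g (kC O) := by
    rw [← Finset.sum_fiberwise_of_maps_to (s := FN) (t := B) (g := kN)
        (fun O hO => by simp only [B, Finset.mem_union]; exact Or.inl (Or.inl (Finset.mem_image_of_mem _ hO))),
      ← Finset.sum_fiberwise_of_maps_to (s := FC) (t := B) (g := kC)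
        (fun O hO => by simp only [B, Finset.mem_union]; exact Or.inl (Or.inr (Finset.mem_image_of_mem _ hO))),
      ← Finset.sum_add_distrib]
    apply Finset.sum_congr rfl
    intro x _
    rw [hf', add_mul]
    congr 1
    · rw [Finset.sum_congr rfl (g := fun _ => g x), Finset.sum_const, smul_eq_mul]
      intro O hO; rw [(Finset.mem_filter.1 hO).2]
    · rw [Finset.sum_congr rfl (g := fun _ => g x), Finset.sum_const, smul_eq_mul]
      intro O hO; rw [(Finset.mem_filter.1 hO).2]
  have hch : ∀ a b, (a, b) ∈ B → ∑ x ∈ B, charFn a b x * g x = g (a, b) := by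
    intro a b hab
    rw [Finset.sum_eq_single_of_mem (a, b) hab]
    · simp [charFn]
    · intro x _ hx; simp [charFn, hx]
  have hR : ∑ x ∈ B, fInv Q st x * g x =
      (m1 + m2) * g (0, 3) + g (p + m1, p) + g (q + m2, q) := by
    simp only [hf, add_mul, Finset.sum_add_distrib]
    rw [hch _ _ (by simp [B]), hch _ _ (by simp [B])]
    simp only [mul_assoc, ← Finset.mul_sum]
    rw [hch _ _ (by simp [B])]
  rw [← hR, hL]

theorem gentle_delete {Q : QuivRel} (hG : IsGentle Q) (S : Finset ℕ)
    (hconn : Connected (deleteArrows Q S)) : IsGentle (deleteArrows Q S) := by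
  obtain ⟨g1, g2, g3, g4, g5, g6, g7, g8, g9, g10, n, g11⟩ := hG
  refine ⟨g1, ?_, hconn, ?_, ?_, ?_, ?_, ?_, ?_, ?_, n, ?_⟩
  · intro a ha
    exact g2 a (Finset.mem_sdiff.1 ha).1
  · intro ρ hρ
    obtain ⟨h1, h2, h3⟩ := Finset.mem_filter.1 hρ
    obtain ⟨k1, k2, k3⟩ := g4 ρ h1
    exact ⟨Finset.mem_sdiff.2 ⟨k1, h2⟩, Finset.mem_sdiff.2 ⟨k2, h3⟩, k3⟩
  · intro x
    refine (Finset.card_le_card ?_).trans (g5 x)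
    exact Finset.filter_subset_filter _ Finset.sdiff_subset
  · intro x
    refine (Finset.card_le_card ?_).trans (g6 x)
    exact Finset.filter_subset_filter _ Finset.sdiff_subset
  · intro a ha
    have ha' := Finset.mem_sdiff.1 ha
    refine (Finset.card_le_card ?_).trans (g7 a ha'.1)
    intro b hb
    simp only [deleteArrows, Finset.mem_filter, Finset.mem_sdiff] at hb ⊢
    exact ⟨hb.1.1, hb.2.1, fun h => hb.2.2 ⟨h, hb.1.2, ha'.2⟩⟩
  · intro a ha
    have ha' := Finset.mem_sdiff.1 ha
    refine (Finset.card_le_card ?_).trans (g8 a ha'.1)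
    intro b hb
    simp only [deleteArrows, Finset.mem_filter, Finset.mem_sdiff] at hb ⊢
    exact ⟨hb.1.1, hb.2.1, fun h => hb.2.2 ⟨h, ha'.2, hb.1.2⟩⟩
  · intro a ha
    have ha' := Finset.mem_sdiff.1 ha
    refine (Finset.card_le_card ?_).trans (g9 a ha'.1)
    intro b hb
    simp only [deleteArrows, Finset.mem_filter, Finset.mem_sdiff] at hb ⊢
    exact ⟨hb.1.1, hb.2.1⟩
  · intro a ha
    have ha' := Finset.mem_sdiff.1 ha
    refine (Finset.card_le_card ?_).trans (g10 a ha'.1)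
    intro b hb
    simp only [deleteArrows, Finset.mem_filter, Finset.mem_sdiff] at hb ⊢
    exact ⟨hb.1.1, hb.2.1⟩
  · intro l hl hlen
    obtain ⟨hne, hm, hc⟩ := hl
    obtain ⟨a, b, hab, hin⟩ := g11 l ⟨hne, fun a ha => (Finset.mem_sdiff.1 (hm a ha)).1, hc⟩ hlen
    refine ⟨a, b, ?_, hin⟩
    have ha := Finset.mem_sdiff.1 (hm a (hin.subset (by simp)))
    have hb := Finset.mem_sdiff.1 (hm b (hin.subset (by simp)))
    exact Finset.mem_filter.2 ⟨hab, ha.2, hb.2⟩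

/-- Let `𝚫 ∈ Ã` and let `𝒪₁, …, 𝒪_m` be *all* the pairwise
distinct triangles in `𝚫`.  Removing one arrow from each triangle yields a
`1`-cycle gentle quiver. -/
theorem stmt13 (Q : QuivRel) (st : SigmaTau Q) (hA : ClassAtilde Q st)
    (m : ℕ) (O : Fin m → Finset ℕ)
    (hOtri : ∀ i, TriangleSet Q (O i)) (hOinj : Function.Injective O)
    (hall : ∀ T : Finset ℕ, TriangleSet Q T → ∃ i, T = O i)
    (α : Fin m → ℕ) (hα : ∀ i, α i ∈ O i) :
    IsGentle (deleteArrows Q (Finset.image α Finset.univ)) ∧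
    (deleteArrows Q (Finset.image α Finset.univ)).V.card =
      (deleteArrows Q (Finset.image α Finset.univ)).A.card := by
  classical
  obtain ⟨hG, m1, m2, p, q, hp, hq, hf⟩ := hA
  -- triangles are disjoint
  have hdisj : ∀ i j a, a ∈ O i → a ∈ O j → i = j := by
    intro i j a hi hj
    have h1 := (COrbit_eq (triangle_orbit st hG (hOtri i)).1 (Finset.mem_coe.2 hi)).2
    have h2 := (COrbit_eq (triangle_orbit st hG (hOtri j)).1 (Finset.mem_coe.2 hj)).2
    exact hOinj (Finset.coe_injective (h1.trans h2.symm))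
  have hαinj : Function.Injective α := by
    intro i j e
    exact hdisj i j (α i) (hα i) (e ▸ hα j)
  have hαA : ∀ i, α i ∈ Q.A := fun i => by
    obtain ⟨b, -, c, -, h, -⟩ := triangle_other (hOtri i) (hα i)
    exact h
  constructor
  · apply gentle_delete hG
    have hsymm : ∀ x y, Adj (deleteArrows Q (Finset.image α Finset.univ)) x y →
        Adj (deleteArrows Q (Finset.image α Finset.univ)) y x := by
      rintro x y ⟨a, ha, h⟩
      exact ⟨a, ha, h.symm⟩
    have hsymm' : ∀ x y,
        Relation.ReflTransGen (Adj (deleteArrows Q (Finset.image α Finset.univ))) x y →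
        Relation.ReflTransGen (Adj (deleteArrows Q (Finset.image α Finset.univ))) y x := by
      intro x y h
      induction h with
      | refl => exact .refl
      | tail _ h ih => exact .head (hsymm _ _ h) ih
    have harr : ∀ a ∈ Q.A, Relation.ReflTransGen
        (Adj (deleteArrows Q (Finset.image α Finset.univ))) (Q.src a) (Q.tgt a) := by
      intro a ha
      by_cases haS : a ∈ Finset.image α Finset.univ
      · obtain ⟨i, -, rfl⟩ := Finset.mem_image.1 haS
        obtain ⟨b, hb, c, hc, -, hbA, hcA, hba, hca, e1, e2, e3⟩ :=
          triangle_other (hOtri i) (hα i)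
        have hnot : ∀ x ∈ O i, x ≠ α i → x ∉ Finset.image α Finset.univ := by
          intro x hx hne hx'
          obtain ⟨j, -, rfl⟩ := Finset.mem_image.1 hx'
          exact hne (by rw [hdisj i j _ hx (hα j)])
        have s1 : Adj (deleteArrows Q (Finset.image α Finset.univ)) (Q.src (α i)) (Q.src b) :=
          ⟨b, Finset.mem_sdiff.2 ⟨hbA, hnot b hb hba⟩, Or.inr ⟨rfl, e1.symm⟩⟩
        have s2 : Adj (deleteArrows Q (Finset.image α Finset.univ)) (Q.src b) (Q.tgt (α i)) :=
          ⟨c, Finset.mem_sdiff.2 ⟨hcA, hnot c hc hca⟩, Or.inr ⟨e3, e2.symm⟩⟩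
        exact .head s1 (.single s2)
      · exact .single ⟨a, Finset.mem_sdiff.2 ⟨ha, haS⟩, Or.inl ⟨rfl, rfl⟩⟩
    intro x hx y hy
    have h := hG.2.2.1 x hx y hy
    induction h with
    | refl => exact .refl
    | tail h1 h2 ih =>
      rename_i b c
      obtain ⟨a, ha, h | h⟩ := h2
      · have hb : b ∈ Q.V := h.1 ▸ (hG.2.1 a ha).1
        have := harr a ha
        rw [h.1, h.2] at this
        exact (ih hb).trans this
      · have hb : b ∈ Q.V := h.2 ▸ (hG.2.1 a ha).2
        have := hsymm' _ _ (harr a ha)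
        rw [h.1, h.2] at this
        exact (ih hb).trans this
  · -- counting
    have hphi : ∀ x y, PhiRel Q st x y → x ∈ NF Q st hG ∧ y ∈ NF Q st hG := fun x y h =>
      ⟨(mem_NF st hG x).2 h.1, (mem_NF st hG y).2 h.2.1⟩
    have hpsi : ∀ x y, PsiRel Q st x y → x ∈ CF Q st ∧ y ∈ CF Q st := fun x y h =>
      ⟨(mem_CF st x).2 h.1, (mem_CF st y).2 h.2.1⟩
    have w1 := weight_sum st hG m1 m2 p q hf Prod.fst
    have w2 := weight_sum st hG m1 m2 p q hf Prod.snd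
    simp only [pN, qN, cls_ncard _ _ hphi, cls_ncard _ _ hpsi, cls_sum _ _ hphi,
      Finset.sum_const_zero] at w1 w2
    rw [total_len st hG] at w2
    have hN := NF_card st hG
    -- number of triangles
    have hm : m = m1 + m2 := by
      have h03 := hf (0, 3)
      have c1 : charFn (p + m1) p (0, 3) = 0 := by
        simp only [charFn, Prod.mk.injEq]
        rw [if_neg]; omega
      have c2 : charFn (q + m2) q (0, 3) = 0 := by
        simp only [charFn, Prod.mk.injEq]
        rw [if_neg]; omega
      have c3 : charFn 0 3 (0, 3) = 1 := by simp [charFn]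
      rw [c1, c2, c3] at h03
      unfold fInv at h03
      have z1 : {O : Set Thread | NOrbit Q st O ∧ pN O = (0, 3).1 ∧ qN O = (0, 3).2} = ∅ := by
        ext P
        simp only [Set.mem_ofPred_eq, Set.mem_empty_iff_false, iff_false]
        rintro ⟨⟨w, hw, rfl⟩, h0, -⟩
        have hfin : {w' | Relation.EqvGen (PhiRel Q st) w w'}.Finite := by
          apply (N_finite st hG).subset
          intro y hy
          have hy' : Relation.EqvGen (PhiRel Q st) w y := hy
          have : InN Q st w ↔ InN Q st y := by
            clear h0 hy hw
            induction hy' with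
            | rel x y h => exact ⟨fun _ => h.2.1, fun _ => h.1⟩
            | refl => exact Iff.rfl
            | symm _ _ _ ih => exact ih.symm
            | trans _ _ _ _ _ ih1 ih2 => exact ih1.trans ih2
          exact this.1 hw
        have h0' : {w' | Relation.EqvGen (PhiRel Q st) w w'}.ncard = 0 := h0
        rw [Set.ncard_eq_zero hfin] at h0'
        have : w ∈ {w' | Relation.EqvGen (PhiRel Q st) w w'} := Relation.EqvGen.refl w
        rw [h0'] at this
        exact this
      have z2 : {P : Set ℕ | COrbit Q st P ∧ ((0, 3) : ℕ × ℕ).1 = 0 ∧ P.ncard = (0, 3).2} =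
          (fun i => ((O i : Finset ℕ) : Set ℕ)) '' Set.univ := by
        ext P
        constructor
        · rintro ⟨h1, -, h2⟩
          obtain ⟨T, hT, rfl⟩ := orbit_triangle st hG h1 h2
          obtain ⟨i, rfl⟩ := hall T hT
          exact ⟨i, trivial, rfl⟩
        · rintro ⟨i, -, rfl⟩
          obtain ⟨h1, h2⟩ := triangle_orbit st hG (hOtri i)
          exact ⟨h1, rfl, h2⟩
      have hcinj : Function.Injective (fun i => ((O i : Finset ℕ) : Set ℕ)) :=
        fun i j e => hOinj (Finset.coe_injective e)
      rw [z1, z2, Set.ncard_image_of_injective _ hcinj,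
        Set.ncard_univ, Nat.card_fin, Set.ncard_empty] at h03
      omega
    have hcard : (Q.A \ Finset.image α Finset.univ).card + m = Q.A.card := by
      have := Finset.card_sdiff_add_card_eq_card (s := Finset.image α Finset.univ) (t := Q.A) (by
        intro x hx
        obtain ⟨i, -, rfl⟩ := Finset.mem_image.1 hx
        exact hαA i)
      rw [Finset.card_image_of_injective _ hαinj, Finset.card_univ, Fintype.card_fin] at this
      exact this
    change Q.V.card = (Q.A \ Finset.image α Finset.univ).card
    omega

end GentleQuiv
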